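/- Let p be a positive rational number with √p irrational, and let x₁ = a₁ + b₁√p, …, xₙ = aₙ + bₙ√p where each xᵢ > 0, all aᵢ, bᵢ are rational, and aᵢ − bᵢ√p > 0 for every i (so each aᵢ > 0). If k ∈ {1, …, n} satisfies |b_k|/a_k = max_{1 ≤ i ≤ n} |bᵢ|/aᵢ, then B(x₁, …, xₙ) = B(x_k); in particular, every rectangle that can be tiled by rectangles with side ratios x₁, …, xₙ can be tiled by rectangles with side ratio x_k alone. -/

import Mathlib

/-- `R` is an axis-parallel closed rectangle with side lengths `w` (horizontal)
and `h` (vertical), both positive. -/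
def IsRect (R : Set (ℝ × ℝ)) (w h : ℝ) : Prop :=
  0 < w ∧ 0 < h ∧ ∃ x y : ℝ, R = Set.Icc x (x + w) ×ˢ Set.Icc y (y + h)

/-- The rectangle `R` is tiled by finitely many axis-parallel rectangles, each of
whose side ratios belongs to `ratios`: the tiles cover `R` and have pairwise
disjoint interiors. -/
def TiledBy (R : Set (ℝ × ℝ)) (ratios : Set ℝ) : Prop :=
  ∃ (m : ℕ) (T : Fin m → Set (ℝ × ℝ)) (w h : Fin m → ℝ),
    (∀ i, IsRect (T i) (w i) (h i)) ∧
    (∀ i, w i / h i ∈ ratios ∨ h i / w i ∈ ratios) ∧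
    (⋃ i, T i) = R ∧
    Pairwise fun i j => Disjoint (interior (T i)) (interior (T j))

/-- `BSet ratios` is the set of positive reals `z` such that some axis-parallel
rectangle with side ratio `z` can be tiled by finitely many axis-parallel
rectangles each of whose side ratio belongs to `ratios`. -/
def BSet (ratios : Set ℝ) : Set ℝ :=
  {z | ∃ (W H : ℝ) (R : Set (ℝ × ℝ)),
    IsRect R W H ∧ (z = W / H ∨ z = H / W) ∧ TiledBy R ratios}

open MeasureTheory Polynomial

/-!
If a `W × H` rectangle is tiled by rectangles `wᵢ × hᵢ`, then `∑ f wᵢ * g hᵢ = f W * g H` for all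
additive `f, g : ℝ → ℝ`. When every `wᵢ / hᵢ` lies in a subfield `K` of `ℝ`, a `K`-linear functional
vanishing at `H` but not at `W` would contradict this identity, so `W / H ∈ K`.

Now let `σ : K → ℝ` be a second embedding, and let `f` be `K`-linear and `g` be `σ`-semilinear with
`f H = g H = 1`. With `rᵢ = wᵢ / hᵢ`, `Fᵢ = f hᵢ`, `Gᵢ = g hᵢ`, the identity gives
`r = ∑ rᵢ Fᵢ² = ∑ rᵢ Fᵢ Gᵢ` and `σ r = ∑ σ rᵢ Fᵢ Gᵢ = ∑ σ rᵢ Gᵢ²` for `r = W / H`, and a positive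
combination of the squares `(Fᵢ + t Gᵢ)²` and `(Fᵢ - Gᵢ)²` transfers the bounds `rᵢ ≤ t * σ rᵢ`
and `σ rᵢ ≤ t * rᵢ` to `r`. For `K = ℚ(√p)` and `r = c + d√p` such a pair of bounds amounts to
`|d| ≤ M * c`. Conversely, when `M = |b| / a`, every such `r` is a nonnegative rational combination
of `x = a + b√p` and its conjugate, which is a positive rational multiple of `x⁻¹`.
-/

section Increments

theorem exists_polynomial_eval_eq {F : Type*} [Field F] (s : Finset F) (f : F → F) :
    ∃ q : F[X], ∀ x ∈ s, q.eval x = f x := by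
  classical
  exact ⟨Lagrange.interpolate s id f, fun x hx =>
    Lagrange.eval_interpolate_at_node f (Set.injOn_id _) hx⟩

theorem integral_Icc_eval_derivative (q : ℝ[X]) {a b : ℝ} (hab : a ≤ b) :
    ∫ t in Set.Icc a b, q.derivative.eval t = q.eval b - q.eval a := by
  rw [integral_Icc_eq_integral_Ioc, ← intervalIntegral.integral_of_le hab]
  exact intervalIntegral.integral_eq_sub_of_hasDerivAt (fun t _ => q.hasDerivAt t)
    (q.derivative.continuous.intervalIntegrable _ _)

theorem setIntegral_Icc_prod_eval_derivative (q r : ℝ[X]) {a b c d : ℝ} (hab : a ≤ b)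
    (hcd : c ≤ d) :
    ∫ z in Set.Icc a b ×ˢ Set.Icc c d, q.derivative.eval z.1 * r.derivative.eval z.2 =
      (q.eval b - q.eval a) * (r.eval d - r.eval c) := by
  rw [Measure.volume_eq_prod, setIntegral_prod_mul (fun t => q.derivative.eval t)
    (fun t => r.derivative.eval t), integral_Icc_eval_derivative q hab,
    integral_Icc_eval_derivative r hcd]

theorem aedisjoint_of_convex_of_disjoint_interior {E : Type*} [NormedAddCommGroup E]
    [NormedSpace ℝ E] [MeasurableSpace E] [BorelSpace E] [FiniteDimensional ℝ E] (μ : Measure E)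
    [μ.IsAddHaarMeasure] {s t : Set E} (hs : Convex ℝ s) (ht : Convex ℝ t)
    (hst : Disjoint (interior s) (interior t)) : AEDisjoint μ s t :=
  hst.aedisjoint.congr (interior_ae_eq_of_null_frontier (hs.addHaar_frontier μ)).symm
    (interior_ae_eq_of_null_frontier (ht.addHaar_frontier μ)).symm

variable {ι : Type*} [Fintype ι] {a b c d : ι → ℝ} {A B C D : ℝ}

theorem sum_polynomial_increment_mul_increment (hab : ∀ i, a i ≤ b i) (hcd : ∀ i, c i ≤ d i)
    (hAB : A ≤ B) (hCD : C ≤ D)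
    (hU : ⋃ i, Set.Icc (a i) (b i) ×ˢ Set.Icc (c i) (d i) = Set.Icc A B ×ˢ Set.Icc C D)
    (hd : Pairwise fun i j => Disjoint (interior (Set.Icc (a i) (b i) ×ˢ Set.Icc (c i) (d i)))
      (interior (Set.Icc (a j) (b j) ×ˢ Set.Icc (c j) (d j))))
    (q r : ℝ[X]) :
    ∑ i, (q.eval (b i) - q.eval (a i)) * (r.eval (d i) - r.eval (c i)) =
      (q.eval B - q.eval A) * (r.eval D - r.eval C) := by
  have hint : IntegrableOn (fun z : ℝ × ℝ => q.derivative.eval z.1 * r.derivative.eval z.2)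
      (Set.Icc A B ×ˢ Set.Icc C D) :=
    ((q.derivative.continuous.comp continuous_fst).mul
      (r.derivative.continuous.comp continuous_snd)).continuousOn.integrableOn_compact
        (isCompact_Icc.prod isCompact_Icc)
  rw [← setIntegral_Icc_prod_eval_derivative q r hAB hCD, ← hU, integral_iUnion_ae
    (fun i => (measurableSet_Icc.prod measurableSet_Icc).nullMeasurableSet)
    (fun i j hij => aedisjoint_of_convex_of_disjoint_interior _
      ((convex_Icc _ _).prod (convex_Icc _ _)) ((convex_Icc _ _).prod (convex_Icc _ _)) (hd hij))
    (hU ▸ hint), tsum_fintype]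
  simp only [setIntegral_Icc_prod_eval_derivative q r (hab _) (hcd _)]

-- Only finitely many values of `f` and `g` occur, so both may be replaced by polynomials.
theorem sum_increment_mul_increment (hab : ∀ i, a i ≤ b i) (hcd : ∀ i, c i ≤ d i)
    (hAB : A ≤ B) (hCD : C ≤ D)
    (hU : ⋃ i, Set.Icc (a i) (b i) ×ˢ Set.Icc (c i) (d i) = Set.Icc A B ×ˢ Set.Icc C D)
    (hd : Pairwise fun i j => Disjoint (interior (Set.Icc (a i) (b i) ×ˢ Set.Icc (c i) (d i)))
      (interior (Set.Icc (a j) (b j) ×ˢ Set.Icc (c j) (d j))))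
    (f g : ℝ → ℝ) :
    ∑ i, (f (b i) - f (a i)) * (g (d i) - g (c i)) = (f B - f A) * (g D - g C) := by
  classical
  obtain ⟨q, hq⟩ := exists_polynomial_eval_eq
    ({A, B} ∪ (Finset.univ.image a ∪ Finset.univ.image b)) f
  obtain ⟨r, hr⟩ := exists_polynomial_eval_eq
    ({C, D} ∪ (Finset.univ.image c ∪ Finset.univ.image d)) g
  have key := sum_polynomial_increment_mul_increment hab hcd hAB hCD hU hd q r
  rw [hq A (by simp), hq B (by simp), hr C (by simp), hr D (by simp)] at key
  rw [← key]
  refine Finset.sum_congr rfl fun i _ => ?_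
  rw [hq (a i) (by simp), hq (b i) (by simp), hr (c i) (by simp), hr (d i) (by simp)]

end Increments

section Tilings

variable {R R' : Set (ℝ × ℝ)} {S S' : Set ℝ} {W H W' H' : ℝ}

theorem isRect_Icc_prod_Icc {w h : ℝ} (hw : 0 < w) (hh : 0 < h) (x y : ℝ) :
    IsRect (Set.Icc x (x + w) ×ˢ Set.Icc y (y + h)) w h :=
  ⟨hw, hh, x, y, rfl⟩

theorem sum_map_mul_map_of_isRect {ι : Type*} [Fintype ι] {T : ι → Set (ℝ × ℝ)} {w h : ι → ℝ}
    (hT : ∀ i, IsRect (T i) (w i) (h i)) (hR : IsRect (⋃ i, T i) W H)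
    (hd : Pairwise fun i j => Disjoint (interior (T i)) (interior (T j))) (f g : ℝ →+ ℝ) :
    ∑ i, f (w i) * g (h i) = f W * g H := by
  choose hw hh x y hxy using hT
  obtain ⟨hW, hH, X, Y, hXY⟩ := hR
  simp only [hxy] at hXY hd
  simpa only [map_add, add_sub_cancel_left] using sum_increment_mul_increment
    (fun i => le_add_of_nonneg_right (hw i).le) (fun i => le_add_of_nonneg_right (hh i).le)
    (le_add_of_nonneg_right hW.le) (le_add_of_nonneg_right hH.le) hXY hd f g

namespace TiledBy

theorem mono (hS : S ⊆ S') (hT : TiledBy R S) : TiledBy R S' := by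
  obtain ⟨m, T, w, h, hrect, hratio, hU, hd⟩ := hT
  exact ⟨m, T, w, h, hrect, fun i => (hratio i).imp (@hS _) (@hS _), hU, hd⟩

theorem of_finite {ι : Type*} [Finite ι] {T : ι → Set (ℝ × ℝ)} {w h : ι → ℝ}
    (hT : ∀ i, IsRect (T i) (w i) (h i)) (hS : ∀ i, w i / h i ∈ S ∨ h i / w i ∈ S)
    (hd : Pairwise fun i j => Disjoint (interior (T i)) (interior (T j))) :
    TiledBy (⋃ i, T i) S := by
  obtain ⟨m, ⟨e⟩⟩ := Finite.exists_equiv_fin ι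
  exact ⟨m, T ∘ e.symm, w ∘ e.symm, h ∘ e.symm, fun i => hT _, fun i => hS _,
    e.symm.surjective.iUnion_comp T, hd.comp_of_injective e.symm.injective⟩

theorem of_isRect (hR : IsRect R W H) (hS : W / H ∈ S) : TiledBy R S := by
  simpa only [Set.iUnion_const] using of_finite (ι := Unit) (fun _ => hR) (fun _ => Or.inl hS)
    Subsingleton.pairwise

theorem union (hR : TiledBy R S) (hR' : TiledBy R' S)
    (hd : Disjoint (interior R) (interior R')) : TiledBy (R ∪ R') S := by
  obtain ⟨m, T, w, h, hrect, hratio, rfl, hdT⟩ := hR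
  obtain ⟨m', T', w', h', hrect', hratio', rfl, hdT'⟩ := hR'
  have hTT' (i j) : Disjoint (interior (T i)) (interior (T' j)) :=
    hd.mono (interior_mono (Set.subset_iUnion T i)) (interior_mono (Set.subset_iUnion T' j))
  have hU : ⋃ i, Sum.elim T T' i = (⋃ i, T i) ∪ ⋃ i, T' i := by
    simp only [Set.iUnion_sum, Sum.elim_inl, Sum.elim_inr]
  rw [← hU]
  refine of_finite (w := Sum.elim w w') (h := Sum.elim h h') ?_ ?_ ?_
  · exact Sum.forall.2 ⟨hrect, hrect'⟩
  · exact Sum.forall.2 ⟨hratio, hratio'⟩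
  · rintro (i | i) (j | j) hij
    · exact hdT fun h => hij (congrArg _ h)
    · exact hTT' i j
    · exact (hTT' j i).symm
    · exact hdT' fun h => hij (congrArg _ h)

theorem image (e : ℝ × ℝ ≃ₜ ℝ × ℝ)
    (he : ∀ T w h, IsRect T w h →
      ∃ w' h', IsRect (e '' T) w' h' ∧ (w' / h' = w / h ∨ w' / h' = h / w))
    (hR : TiledBy R S) : TiledBy (e '' R) S := by
  obtain ⟨m, T, w, h, hrect, hratio, rfl, hd⟩ := hR
  choose w' h' hrect' hratio' using fun i => he _ _ _ (hrect i)
  rw [Set.image_iUnion]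
  refine of_finite hrect' (fun i => ?_) fun i j hij => ?_
  · rw [← inv_div (w' i) (h' i)]
    rcases hratio' i with heq | heq <;> rw [heq, inv_div]
    exacts [hratio i, (hratio i).symm]
  · simpa only [← e.image_interior, Set.disjoint_image_iff e.injective] using hd hij

theorem image_swap (hR : TiledBy R S) : TiledBy (Prod.swap '' R) S := by
  refine hR.image (Homeomorph.prodComm ℝ ℝ) ?_
  rintro _ w h ⟨hw, hh, x, y, rfl⟩
  exact ⟨h, w, ⟨hh, hw, y, x, Set.image_swap_prod _ _⟩, Or.inr rfl⟩

theorem image_affine {c : ℝ} (hc : 0 < c) (u v : ℝ) (hR : TiledBy R S) :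
    TiledBy (Prod.map (c * · + u) (c * · + v) '' R) S := by
  refine hR.image ((affineHomeomorph c u hc.ne').prodCongr (affineHomeomorph c v hc.ne')) ?_
  rintro _ w h ⟨hw, hh, x, y, rfl⟩
  refine ⟨c * w, c * h, ⟨mul_pos hc hw, mul_pos hc hh, c * x + u, c * y + v, ?_⟩,
    Or.inl (mul_div_mul_left w h hc.ne')⟩
  refine (Set.prodMap_image_prod _ _ _ _).trans ?_
  congr 1
  · exact (Set.image_affine_Icc' hc ..).trans (by ring_nf)
  · exact (Set.image_affine_Icc' hc ..).trans (by ring_nf)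

theorem of_div_eq_div (hT : TiledBy R S) (hR : IsRect R W H) (hR' : IsRect R' W' H')
    (hdiv : W' / H' = W / H) : TiledBy R' S := by
  obtain ⟨hW, hH, x, y, rfl⟩ := hR
  obtain ⟨hW', hH', x', y', rfl⟩ := hR'
  have hc : 0 < H' / H := div_pos hH' hH
  have hWW' : H' / H * W = W' := by
    rw [div_eq_div_iff hH'.ne' hH.ne'] at hdiv
    rw [div_mul_eq_mul_div, div_eq_iff hH.ne', hdiv, mul_comm]
  have hHH' : H' / H * H = H' := div_mul_cancel₀ _ hH.ne'
  convert hT.image_affine hc (x' - H' / H * x) (y' - H' / H * y) using 1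
  rw [Set.prodMap_image_prod, Set.image_affine_Icc' hc, Set.image_affine_Icc' hc, mul_add, mul_add,
    hWW', hHH']
  ring_nf

theorem exists_sides {C : Set ℝ} (hC : ∀ r ∈ C, r⁻¹ ∈ C) (hT : TiledBy R C) (hR : IsRect R W H) :
    ∃ (m : ℕ) (w h : Fin m → ℝ), (∀ i, 0 < w i) ∧ (∀ i, 0 < h i) ∧ (∀ i, w i / h i ∈ C) ∧
      ∀ f g : ℝ →+ ℝ, ∑ i, f (w i) * g (h i) = f W * g H := by
  obtain ⟨m, T, w, h, hrect, hratio, rfl, hd⟩ := hT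
  refine ⟨m, w, h, fun i => (hrect i).1, fun i => (hrect i).2.1, fun i => ?_,
    sum_map_mul_map_of_isRect hrect hR hd⟩
  exact (hratio i).elim id fun hi => inv_div (h i) (w i) ▸ hC _ hi

end TiledBy

end Tilings

namespace BSet

variable {S S' C : Set ℝ} {z z' : ℝ}

theorem mono (hS : S ⊆ S') : BSet S ⊆ BSet S' := by
  rintro z ⟨W, H, R, hR, hz, hT⟩
  exact ⟨W, H, R, hR, hz, hT.mono hS⟩

theorem pos_of_mem (hz : z ∈ BSet S) : 0 < z := by
  obtain ⟨W, H, R, ⟨hW, hH, -⟩, rfl | rfl, -⟩ := hz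
  exacts [div_pos hW hH, div_pos hH hW]

theorem mem_of_mem (hz : 0 < z) (hzS : z ∈ S) : z ∈ BSet S := by
  have hR := isRect_Icc_prod_Icc hz one_pos 0 0
  exact ⟨z, 1, _, hR, Or.inl (div_one z).symm, .of_isRect hR (by rwa [div_one])⟩

theorem inv_mem (hz : z ∈ BSet S) : z⁻¹ ∈ BSet S := by
  obtain ⟨W, H, R, hR, hz, hT⟩ := hz
  refine ⟨W, H, R, hR, ?_, hT⟩
  rcases hz with rfl | rfl
  · exact Or.inr (inv_div W H)
  · exact Or.inl (inv_div H W)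

theorem tiledBy_of_mem {R : Set (ℝ × ℝ)} {W H : ℝ} (hR : IsRect R W H) (h : W / H ∈ BSet S) :
    TiledBy R S := by
  obtain ⟨W', H', R', hR', heq | heq, hT⟩ := h
  · exact hT.of_div_eq_div hR' hR heq
  · obtain ⟨hW', hH', x, y, rfl⟩ := hR'
    have hT' := hT.image_swap
    rw [Set.image_swap_prod] at hT'
    exact hT'.of_div_eq_div (isRect_Icc_prod_Icc hH' hW' y x) hR heq

theorem add_mem (hz : z ∈ BSet S) (hz' : z' ∈ BSet S) : z + z' ∈ BSet S := by
  have hz0 := pos_of_mem hz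
  have hz0' := pos_of_mem hz'
  have hT := (tiledBy_of_mem (isRect_Icc_prod_Icc hz0 one_pos 0 0) (by rwa [div_one])).union
    (tiledBy_of_mem (isRect_Icc_prod_Icc hz0' one_pos (0 + z) 0) (by rwa [div_one])) ?_
  · rw [← Set.union_prod, Set.Icc_union_Icc_eq_Icc (by linarith) (by linarith), add_assoc] at hT
    exact ⟨z + z', 1, _, isRect_Icc_prod_Icc (add_pos hz0 hz0') one_pos 0 0,
      Or.inl (div_one _).symm, hT⟩
  · simp only [interior_prod_eq, interior_Icc]
    exact Set.disjoint_prod.2 (Or.inl (Set.Ioo_disjoint_Ioo.2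
      ((min_le_left _ _).trans (le_max_right _ _))))

theorem natCast_mul_mem (hz : z ∈ BSet S) {n : ℕ} (hn : 0 < n) : (n : ℝ) * z ∈ BSet S := by
  induction n, hn using Nat.le_induction with
  | base => rwa [Nat.cast_one, one_mul]
  | succ n _ ih => rw [Nat.cast_succ, add_one_mul]; exact add_mem ih hz

theorem ratCast_mul_mem (hz : z ∈ BSet S) {q : ℚ} (hq : 0 < q) : (q : ℝ) * z ∈ BSet S := by
  lift q to ℚ≥0 using hq.le
  have hnum : 0 < q.num := NNRat.num_pos.2 (NNRat.cast_pos.1 hq)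
  have h := natCast_mul_mem (inv_mem (natCast_mul_mem (inv_mem hz) q.den_pos)) hnum
  rwa [mul_inv, inv_inv, ← mul_assoc, ← div_eq_mul_inv, ← NNRat.cast_def, ← Rat.cast_nnratCast] at h

theorem ratCast_mul_add_ratCast_mul_mem (hz : z ∈ BSet S) (hz' : z' ∈ BSet S) {s t : ℚ}
    (hs : 0 ≤ s) (ht : 0 ≤ t) (hst : 0 < s + t) : (s : ℝ) * z + t * z' ∈ BSet S := by
  rcases hs.eq_or_lt with rfl | hs
  · rw [Rat.cast_zero, zero_mul, zero_add]
    exact ratCast_mul_mem hz' (by rwa [zero_add] at hst)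
  rcases ht.eq_or_lt with rfl | ht
  · rw [Rat.cast_zero, zero_mul, add_zero]
    exact ratCast_mul_mem hz hs
  exact add_mem (ratCast_mul_mem hz hs) (ratCast_mul_mem hz' ht)

theorem subset_of_forall_isRect (hC : ∀ r ∈ C, r⁻¹ ∈ C)
    (hdiv : ∀ R W H, IsRect R W H → TiledBy R S → W / H ∈ C) : BSet S ⊆ C := by
  rintro z ⟨W, H, R, hR, rfl | rfl, hT⟩
  · exact hdiv R W H hR hT
  · exact inv_div W H ▸ hC _ (hdiv R W H hR hT)

end BSet

section Embeddings

theorem exists_semilinear_eq_zero_eq {K L M : Type*} [Field K] [Field L] [Field M] (τ : K →+* L)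
    (σ : K →+* M) {u v : L} (huv : ∀ s, τ s * u ≠ v) (c : M) :
    ∃ g : L →+ M, (∀ s y, g (τ s * y) = σ s * g y) ∧ g u = 0 ∧ g v = c := by
  let : Algebra K L := τ.toAlgebra
  let : Algebra K M := σ.toAlgebra
  have hv : v ∉ Submodule.span K {u} := fun h =>
    let ⟨s, hs⟩ := Submodule.mem_span_singleton.1 h
    huv s hs
  obtain ⟨g, hgu, hgv⟩ :=
    LinearMap.exists_extend_of_notMem (0 : Submodule.span K {u} →ₗ[K] M) hv c
  refine ⟨g.toAddMonoidHom, fun s y => g.map_smul s y, ?_, hgv⟩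
  exact LinearMap.congr_fun hgu ⟨u, Submodule.mem_span_singleton_self u⟩

theorem BSet.subfield_subset (K : Subfield ℝ) : BSet (K : Set ℝ) ⊆ K := by
  refine subset_of_forall_isRect (fun _ => K.inv_mem) fun R W H hR hT => ?_
  obtain ⟨m, w, h, hw, hh, hK, hsum⟩ := hT.exists_sides (fun _ => K.inv_mem) hR
  have hH := hR.2.1
  by_contra hWH
  obtain ⟨f, hf, hfH, hfW⟩ := exists_semilinear_eq_zero_eq K.subtype K.subtype (u := H) (v := W)
    (fun s hs => hWH (by rw [← hs, mul_div_cancel_right₀ _ hH.ne']; exact s.2)) 1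
  have hfw (i) : f (w i) = w i / h i * f (h i) := by
    simpa [div_mul_cancel₀ _ (hh i).ne'] using hf ⟨_, hK i⟩ (h i)
  have hsq : ∑ i, w i / h i * (f (h i) * f (h i)) = 0 := by
    simpa only [hfw, hfH, mul_zero, mul_assoc] using hsum f f
  have hfh (i) : f (h i) = 0 := by
    have hi := (Finset.sum_eq_zero_iff_of_nonneg fun i _ =>
      mul_nonneg (div_pos (hw i) (hh i)).le (mul_self_nonneg (f (h i)))).1 hsq i (Finset.mem_univ i)
    simpa [(hw i).ne', (hh i).ne'] using hi
  have hfWH := hsum f (AddMonoidHom.id ℝ)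
  simp only [hfw, hfh, hfW, mul_zero, zero_mul, Finset.sum_const_zero, one_mul,
    AddMonoidHom.id_apply] at hfWH
  exact hH.ne hfWH

variable {K : Type*} [Field K] {τ σ : K →+* ℝ} {t : ℝ}

variable (τ σ t) in
/-- The positive elements of `τ(K) ⊆ ℝ` whose ratio to their conjugate under `σ` lies between `t⁻¹`
and `t`. -/
def conjCone : Set ℝ :=
  {r | 0 < r ∧ ∃ s, τ s = r ∧ τ s ≤ t * σ s ∧ σ s ≤ t * τ s}

theorem inv_mem_conjCone (ht : 0 ≤ t) : ∀ r ∈ conjCone τ σ t, r⁻¹ ∈ conjCone τ σ t := by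
  rintro _ ⟨hpos, s, rfl, hτσ, hστ⟩
  have hσ : 0 < σ s := pos_of_mul_pos_right (hpos.trans_le hτσ) ht
  refine ⟨inv_pos.2 hpos, s⁻¹, map_inv₀ τ s, ?_, ?_⟩
  · rwa [map_inv₀, map_inv₀, ← div_eq_mul_inv, le_div_iff₀ hσ, inv_mul_le_iff₀ hpos, mul_comm]
  · rwa [map_inv₀, map_inv₀, ← div_eq_mul_inv, le_div_iff₀ hpos, inv_mul_le_iff₀ hσ, mul_comm]

theorem le_mul_of_sum_eq {ι : Type*} [Fintype ι] {r r' F G : ι → ℝ} {ρ ρ' : ℝ} (ht : 0 ≤ t)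
    (hr : ∀ i, r i ≤ t * r' i) (hr' : ∀ i, r' i ≤ t * r i)
    (hFF : ∑ i, r i * (F i * F i) = ρ) (hFG : ∑ i, r i * (F i * G i) = ρ)
    (hGF : ∑ i, r' i * (G i * F i) = ρ') (hGG : ∑ i, r' i * (G i * G i) = ρ') :
    ρ ≤ t * ρ' := by
  have hnonneg : 0 ≤ ∑ i, ((t * r' i - r i) * (F i + t * G i) ^ 2 +
      t * ((t * r i - r' i) * (F i - G i) ^ 2)) :=
    Finset.sum_nonneg fun i _ => add_nonneg
      (mul_nonneg (sub_nonneg.2 (hr i)) (sq_nonneg _))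
      (mul_nonneg ht (mul_nonneg (sub_nonneg.2 (hr' i)) (sq_nonneg _)))
  have hexpand : ∑ i, ((t * r' i - r i) * (F i + t * G i) ^ 2 +
      t * ((t * r i - r' i) * (F i - G i) ^ 2)) = (t + 1) ^ 2 * (t * ρ' - ρ) := by
    calc
      _ = ∑ i, ((t ^ 2 - 1) * (r i * (F i * F i)) - 2 * t * (t + 1) * (r i * (F i * G i)) +
            2 * t * (t + 1) * (r' i * (G i * F i)) + (t ^ 2 - 1) * t * (r' i * (G i * G i))) :=
        Finset.sum_congr rfl fun i _ => by ring
      _ = (t ^ 2 - 1) * ρ - 2 * t * (t + 1) * ρ + 2 * t * (t + 1) * ρ' + (t ^ 2 - 1) * t * ρ' := by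
        simp only [Finset.sum_add_distrib, Finset.sum_sub_distrib, ← Finset.mul_sum, hFF, hFG, hGF,
          hGG]
      _ = _ := by ring
  rw [hexpand] at hnonneg
  exact sub_nonneg.1 (nonneg_of_mul_nonneg_right hnonneg (by positivity))

theorem BSet.conjCone_subset (ht : 0 ≤ t) : BSet (conjCone τ σ t) ⊆ conjCone τ σ t := by
  refine subset_of_forall_isRect (inv_mem_conjCone ht) fun R W H hR hT => ?_
  have hsub : conjCone τ σ t ⊆ (τ.fieldRange : Set ℝ) := fun _ ⟨_, s, hs, _⟩ => ⟨s, hs⟩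
  have hWH : W / H ∈ τ.fieldRange :=
    subfield_subset τ.fieldRange ⟨W, H, R, hR, Or.inl rfl, hT.mono hsub⟩
  obtain ⟨m, w, h, -, hh, hC, hsum⟩ := hT.exists_sides (inv_mem_conjCone ht) hR
  obtain ⟨hW, hH, -⟩ := hR
  obtain ⟨s, hs⟩ := hWH
  choose _ u hu huτ huσ using hC
  obtain ⟨f, hf, -, hfH⟩ := exists_semilinear_eq_zero_eq τ τ (u := 0) (v := H)
    (fun _ => by rw [mul_zero]; exact hH.ne) 1
  obtain ⟨g, hg, -, hgH⟩ := exists_semilinear_eq_zero_eq τ σ (u := 0) (v := H)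
    (fun _ => by rw [mul_zero]; exact hH.ne) 1
  have hsum_conj {φ : K →+* ℝ} {e e' : ℝ →+ ℝ} (he : ∀ s y, e (τ s * y) = φ s * e y)
      (heH : e H = 1) (heH' : e' H = 1) : ∑ i, φ (u i) * (e (h i) * e' (h i)) = φ s := by
    have hw (i) : e (w i) = φ (u i) * e (h i) := by
      rw [← he, hu, div_mul_cancel₀ _ (hh i).ne']
    have hW : e W = φ s := by
      rw [← div_mul_cancel₀ W hH.ne', ← hs, he, heH, mul_one]
    simpa only [hw, hW, heH', mul_one, mul_assoc] using hsum e e'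
  have hff := hsum_conj hf hfH hfH
  have hfg := hsum_conj hf hfH hgH
  have hgf := hsum_conj hg hgH hfH
  have hgg := hsum_conj hg hgH hgH
  exact ⟨div_pos hW hH, s, hs, le_mul_of_sum_eq ht huτ huσ hff hfg hgf hgg,
    le_mul_of_sum_eq ht huσ huτ hgg hgf hfg hff⟩

end Embeddings

section RealQuadratic

/-- The numbers `c + d√p` with `c > 0` and `|d| / c ≤ M`. -/
def slopeCone (p M : ℚ) : Set ℝ :=
  {r | ∃ c d : ℚ, c + d * √p = r ∧ 0 < c ∧ |d| ≤ M * c}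

variable {p : ℚ}

theorem exists_quadraticAlgebra_ringHom {u : ℝ} (hu : u * u = p) :
    ∃ τ : QuadraticAlgebra ℚ p 0 →+* ℝ, ∀ z, τ z = z.re + z.im * u := by
  refine ⟨(QuadraticAlgebra.lift ⟨u, ?_⟩ : QuadraticAlgebra ℚ p 0 →ₐ[ℚ] ℝ), fun z => ?_⟩
  · rw [hu, zero_smul, add_zero, Rat.smul_one_eq_cast]
  · simp [QuadraticAlgebra.lift, Rat.smul_def]

theorem sq_ne_of_irrational_sqrt (hirr : Irrational √p) (r : ℚ) : r ^ 2 ≠ p := by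
  rintro rfl
  rw [Rat.cast_pow, Real.sqrt_sq_eq_abs, ← Rat.cast_abs] at hirr
  exact hirr.ne_rat _ rfl

theorem add_mul_le_mul_sub_mul_iff {u M c d : ℝ} (hu : 0 < u) (hM : M * u < 1) :
    c + d * u ≤ (1 + M * u) / (1 - M * u) * (c - d * u) ↔ d ≤ M * c := by
  have hdiff : (1 + M * u) * (c - d * u) - (c + d * u) * (1 - M * u) = 2 * u * (M * c - d) := by
    ring
  rw [div_mul_eq_mul_div, le_div_iff₀ (sub_pos.2 hM), ← sub_nonneg, hdiff,
    mul_nonneg_iff_of_pos_left (by positivity), sub_nonneg]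

theorem add_mul_pos_iff {u M c d : ℝ} (hu : 0 ≤ u) (hM₀ : 0 ≤ M) (hM : M * u < 1)
    (hd : |d| ≤ M * c) : 0 < c + d * u ↔ 0 < c := by
  have hdu : |d * u| ≤ M * u * c := by
    rw [abs_mul, abs_of_nonneg hu, mul_right_comm]
    exact mul_le_mul_of_nonneg_right hd hu
  obtain ⟨hlower, hupper⟩ := abs_le.1 hdu
  constructor <;> intro h
  · exact pos_of_mul_pos_right (a := 1 + M * u) (by linarith) (by positivity)
  · linarith [mul_pos (sub_pos.2 hM) h]

theorem conjCone_eq_slopeCone [Fact (∀ r : ℚ, r ^ 2 ≠ p + 0 * r)] {M : ℚ}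
    {τ σ : QuadraticAlgebra ℚ p 0 →+* ℝ} (hτ : ∀ z, τ z = z.re + z.im * √p)
    (hσ : ∀ z, σ z = z.re - z.im * √p) (hp : 0 < p) (hM₀ : 0 ≤ M) (hM : M * √p < 1) :
    conjCone τ σ ((1 + M * √p) / (1 - M * √p)) = slopeCone p M := by
  have hu : 0 < √(p : ℝ) := Real.sqrt_pos.2 (Rat.cast_pos.2 hp)
  have hbounds (c d : ℚ) :
      (c + d * √p ≤ (1 + M * √p) / (1 - M * √p) * (c - d * √p) ∧
        c - d * √p ≤ (1 + M * √p) / (1 - M * √p) * (c + d * √p)) ↔ |(d : ℝ)| ≤ M * c := by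
    have hneg := add_mul_le_mul_sub_mul_iff (c := c) (d := -d) hu hM
    rw [neg_mul, sub_neg_eq_add, ← sub_eq_add_neg] at hneg
    rw [add_mul_le_mul_sub_mul_iff hu hM, hneg, abs_le']
  ext r
  constructor
  · rintro ⟨hr, z, rfl, hz⟩
    rw [hτ, hσ, hbounds] at hz
    rw [hτ, add_mul_pos_iff hu.le (Rat.cast_nonneg.2 hM₀) hM hz] at hr
    exact ⟨z.re, z.im, (hτ z).symm, by exact_mod_cast hr, by exact_mod_cast hz⟩
  · rintro ⟨c, d, rfl, hc, hd⟩
    have hd' : |(d : ℝ)| ≤ M * c := by exact_mod_cast hd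
    refine ⟨?_, ⟨c, d⟩, hτ _, ?_⟩
    · rwa [add_mul_pos_iff hu.le (Rat.cast_nonneg.2 hM₀) hM hd', Rat.cast_pos]
    · rwa [hτ, hσ, hbounds]

theorem BSet.slopeCone_subset (hirr : Irrational √p) {M : ℚ} (hM₀ : 0 ≤ M) (hM : M * √p < 1) :
    BSet (slopeCone p M) ⊆ slopeCone p M := by
  have hu : 0 < √(p : ℝ) := (Real.sqrt_nonneg _).lt_of_ne' hirr.ne_zero
  have hp : (0 : ℝ) < p := Real.sqrt_pos.1 hu
  have hsq : √(p : ℝ) * √p = p := Real.mul_self_sqrt hp.le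
  have : Fact (∀ r : ℚ, r ^ 2 ≠ p + 0 * r) :=
    ⟨fun r => by rw [zero_mul, add_zero]; exact sq_ne_of_irrational_sqrt hirr r⟩
  obtain ⟨τ, hτ⟩ := exists_quadraticAlgebra_ringHom hsq
  obtain ⟨σ, hσ⟩ := exists_quadraticAlgebra_ringHom ((neg_mul_neg _ _).trans hsq)
  simp only [mul_neg, ← sub_eq_add_neg] at hσ
  rw [← conjCone_eq_slopeCone hτ hσ (Rat.cast_pos.1 hp) hM₀ hM]
  have hMu : 0 ≤ (M : ℝ) * √p := mul_nonneg (Rat.cast_nonneg.2 hM₀) hu.le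
  exact conjCone_subset (div_nonneg (by linarith) (by linarith))

theorem sub_mem_BSet_singleton_add {a b : ℚ} (hp : 0 ≤ p) (hx : 0 < a + b * √p)
    (hconj : 0 < a - b * √p) : a - b * √p ∈ BSet {a + b * √p} := by
  have hnorm : ((a ^ 2 - b ^ 2 * p : ℚ) : ℝ) = (a - b * √p) * (a + b * √p) := by
    push_cast
    linear_combination (b : ℝ) ^ 2 * Real.mul_self_sqrt (Rat.cast_nonneg (K := ℝ).2 hp)
  have hnorm_pos : 0 < a ^ 2 - b ^ 2 * p := by
    rw [← Rat.cast_pos (K := ℝ), hnorm]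
    exact mul_pos hconj hx
  have h := BSet.ratCast_mul_mem (BSet.inv_mem (BSet.mem_of_mem hx (Set.mem_singleton _))) hnorm_pos
  rwa [hnorm, mul_inv_cancel_right₀ hx.ne'] at h

theorem slopeCone_subset_BSet_singleton {a b : ℚ} (hp : 0 ≤ p) (hx : 0 < a + b * √p)
    (hconj : 0 < a - b * √p) : slopeCone p (|b| / a) ⊆ BSet {a + b * √p} := by
  rintro _ ⟨c, d, rfl, hc, hd⟩
  have ha : 0 < a := by exact_mod_cast (by linarith : (0 : ℝ) < a)
  obtain ⟨e, rfl, he⟩ : ∃ e, e * b = d ∧ |e| ≤ c / a := by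
    rcases eq_or_ne b 0 with rfl | hb
    · have hd₀ : d = 0 := by simpa using hd
      exact ⟨0, by rw [hd₀, mul_zero], by rw [abs_zero]; positivity⟩
    · refine ⟨d / b, div_mul_cancel₀ d hb, ?_⟩
      rwa [abs_div, div_le_iff₀ (abs_pos.2 hb), div_mul_eq_mul_div, mul_comm, ← div_mul_eq_mul_div]
  obtain ⟨hlower, hupper⟩ := abs_le.1 he
  have hca : 0 < c / a := div_pos hc ha
  convert BSet.ratCast_mul_add_ratCast_mul_mem (BSet.mem_of_mem hx (Set.mem_singleton _))
    (sub_mem_BSet_singleton_add hp hx hconj) (s := (c / a + e) / 2) (t := (c / a - e) / 2)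
    (by linarith) (by linarith) (by linarith) using 1
  have hca_mul : (c : ℝ) / a * a = c := div_mul_cancel₀ _ (Rat.cast_ne_zero.2 ha.ne')
  push_cast
  linear_combination -hca_mul

theorem abs_div_mul_lt_one {a b u : ℝ} (hu : 0 ≤ u) (hx : 0 < a + b * u) (hconj : 0 < a - b * u) :
    |b| / a * u < 1 := by
  have hlt : |b * u| < a := abs_lt.2 ⟨by linarith, by linarith⟩
  rwa [div_mul_eq_mul_div, div_lt_one (by linarith), ← abs_of_nonneg hu, ← abs_mul]

end RealQuadratic

/-- If all conjugates are positive and `k` realizes `max |bᵢ|/aᵢ`, then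
`B(x₁, …, xₙ) = B(x_k)`. -/
theorem stmt_14 (p : ℚ) (hp : 0 < p) (hirr : Irrational (Real.sqrt p))
    (n : ℕ) (a b : Fin n → ℚ) (x : Fin n → ℝ)
    (hx : ∀ i, x i = (a i : ℝ) + (b i : ℝ) * Real.sqrt p)
    (hxpos : ∀ i, 0 < x i)
    (hconj : ∀ i, 0 < (a i : ℝ) - (b i : ℝ) * Real.sqrt p)
    (k : Fin n) (hk : ∀ i, |b i| / a i ≤ |b k| / a k) :
    BSet (Set.range x) = BSet {x k} := by
  have ha (i) : 0 < a i := by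
    have hxi := hx i ▸ hxpos i
    exact_mod_cast (by linarith [hconj i] : (0 : ℝ) < a i)
  have hxk : 0 < a k + b k * √p := hx k ▸ hxpos k
  have hM : (|b k| / a k : ℚ) * √p < 1 := by
    exact_mod_cast abs_div_mul_lt_one (Real.sqrt_nonneg _) hxk (hconj k)
  have hrange : Set.range x ⊆ slopeCone p (|b k| / a k) := Set.range_subset_iff.2 fun i =>
    ⟨a i, b i, (hx i).symm, ha i, (div_le_iff₀ (ha i)).1 (hk i)⟩
  refine Set.Subset.antisymm ?_ (BSet.mono (Set.singleton_subset_iff.2 ⟨k, rfl⟩))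
  calc
    BSet (Set.range x) ⊆ BSet (slopeCone p (|b k| / a k)) := BSet.mono hrange
    _ ⊆ slopeCone p (|b k| / a k) :=
      BSet.slopeCone_subset hirr (div_nonneg (abs_nonneg _) (ha k).le) hM
    _ ⊆ BSet {x k} := hx k ▸ slopeCone_subset_BSet_singleton hp.le hxk (hconj k)
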